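/- A finite simple graph G has a perfect matching if and only if for every subset S of vertices, the number of connected components of G - S with an odd number of vertices is at most the cardinality of S. -/

import Mathlib

theorem deleteVerts_top_eq_induce_compl {V : Type*} {G : SimpleGraph V} (S : Set V) :
    (⊤ : G.Subgraph).deleteVerts S = (⊤ : G.Subgraph).induce Sᶜ := by
  rw [SimpleGraph.Subgraph.deleteVerts, SimpleGraph.Subgraph.verts_top, Set.compl_eq_univ_sdiff]

theorem isTutteViolator_iff_ncard_lt_ncard_oddComponents {V : Type*} {G : SimpleGraph V}
    {S : Set V} :
    G.IsTutteViolator S ↔ S.ncard < (G.induce Sᶜ).oddComponents.ncard := by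
  -- The vertex set of `(⊤ : G.Subgraph).induce Sᶜ` unfolds to `Sᶜ`, so the rewritten graphs agree
  -- definitionally and no isomorphism is needed to compare their components.
  rw [SimpleGraph.IsTutteViolator, deleteVerts_top_eq_induce_compl,
    SimpleGraph.induce_eq_coe_induce_top]
  rfl

/-- Tutte's theorem: a finite simple graph has a perfect matching iff for every
vertex set `S`, the number of odd components of `G - S` is at most `|S|`. -/
theorem tutte_theorem {V : Type*} [Fintype V] (G : SimpleGraph V) :
    (∃ M : G.Subgraph, M.IsPerfectMatching) ↔
      ∀ S : Set V,
        {c : (G.induce Sᶜ).ConnectedComponent | Odd (Nat.card c.supp)}.ncard ≤ S.ncard := by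
  simp only [SimpleGraph.tutte, isTutteViolator_iff_ncard_lt_ncard_oddComponents, not_lt,
    SimpleGraph.oddComponents, Nat.card_coe_set_eq]
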